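/- Ree's shuffle identity: Let d ≥ 1 and let X : [0,1] → ℝ^d be a path whose coordinate functions X_1, …, X_d are continuously differentiable. Extend w ↦ σ(X)_w linearly to a linear functional σ(X) on ℝ⟨1, …, d⟩. Then σ(X) is an algebra homomorphism from the shuffle algebra (ℝ⟨1, …, d⟩, ⧢) to ℝ: for all words u and v, σ(X)(u ⧢ v) = σ(X)_u · σ(X)_v. -/

import Mathlib

/-- The signature coefficient of the path `X` over `[a,b]` at a word `w`:
for `w = i₁ ⋯ i_k`, it is the iterated integral
`∫_{a < t₁ < ⋯ < t_k < b} X_{i₁}'(t₁) ⋯ X_{i_k}'(t_k)`, and `1` for the empty word. -/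
noncomputable def sig {d : ℕ} (X : ℝ → Fin d → ℝ) (a b : ℝ) : List (Fin d) → ℝ
  | [] => 1
  | i :: w => ∫ t in a..b, deriv (fun s => X s i) t * sig X t b w

/-- The shuffle product of two words, as an element of the free vector space
`ℝ⟨1,…,d⟩` with basis the words over `{1,…,d}`.  It is determined recursively by
`e ⧢ w = w ⧢ e = w` and `(u·a) ⧢ (v·b) = (u ⧢ (v·b))·a + ((u·a) ⧢ v)·b`. -/
noncomputable def shufW {d : ℕ} : List (Fin d) → List (Fin d) → (List (Fin d) →₀ ℝ)
  | u, v =>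
    match hu : u.reverse, hv : v.reverse with
    | [], _ => Finsupp.single v 1
    | _ :: _, [] => Finsupp.single u 1
    | a :: u', b :: v' =>
        Finsupp.mapDomain (· ++ [a]) (shufW u'.reverse (v'.reverse ++ [b]))
          + Finsupp.mapDomain (· ++ [b]) (shufW (u'.reverse ++ [a]) v'.reverse)
termination_by u v => u.length + v.length
decreasing_by
  all_goals
    (have h1 : u.length = u'.length + 1 := by
        have := congrArg List.length hu; simpa using this
     have h2 : v.length = v'.length + 1 := by
        have := congrArg List.length hv; simpa using this
     simp [h1, h2] <;> omega)

/-- The bilinear extension of the shuffle product to the free vector space `ℝ⟨1,…,d⟩`. -/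
noncomputable def shuffleF {d : ℕ} (f g : List (Fin d) →₀ ℝ) : List (Fin d) →₀ ℝ :=
  f.sum fun u a => g.sum fun v b => (a * b) • shufW u v

/-- The linear extension of `w ↦ σ(X)_w` to a linear functional on `ℝ⟨1,…,d⟩`. -/
noncomputable def sigL {d : ℕ} (X : ℝ → Fin d → ℝ) (f : List (Fin d) →₀ ℝ) : ℝ :=
  f.sum fun w a => a * sig X 0 1 w


/-- Pairing of a functional on words with the front-recursive shuffle product. -/
noncomputable def shG {d : ℕ} : (List (Fin d) → ℝ) → List (Fin d) → List (Fin d) → ℝ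
  | φ, [], v => φ v
  | φ, a :: u, [] => φ (a :: u)
  | φ, a :: u, b :: v =>
      shG (fun w => φ (a :: w)) u (b :: v) + shG (fun w => φ (b :: w)) (a :: u) v
termination_by _ u v => u.length + v.length

theorem shG_nil_right {d : ℕ} (φ : List (Fin d) → ℝ) (u : List (Fin d)) :
    shG φ u [] = φ u := by
  cases u <;> simp [shG]

theorem shG_back_left {d : ℕ} (a b : Fin d) (v : List (Fin d)) (φ : List (Fin d) → ℝ) :
    shG φ [a] (v ++ [b])
      = φ (v ++ [b] ++ [a]) + shG (fun w => φ (w ++ [b])) [a] v := by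
  induction v generalizing φ with
  | nil => simp [shG]; ring
  | cons y v ih =>
    simp only [List.cons_append, shG]
    rw [ih]
    simp
    ring

theorem shG_back_right {d : ℕ} (a b : Fin d) (u : List (Fin d)) (φ : List (Fin d) → ℝ) :
    shG φ (u ++ [a]) [b]
      = shG (fun w => φ (w ++ [a])) u [b] + φ (u ++ [a] ++ [b]) := by
  induction u generalizing φ with
  | nil => simp [shG]; ring
  | cons x u ih =>
    simp only [List.cons_append, shG]
    rw [ih]
    simp [shG_nil_right]
    ring

theorem shG_back {d : ℕ} (a b : Fin d) (u v : List (Fin d)) (φ : List (Fin d) → ℝ) :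
    shG φ (u ++ [a]) (v ++ [b])
      = shG (fun w => φ (w ++ [a])) u (v ++ [b])
        + shG (fun w => φ (w ++ [b])) (u ++ [a]) v := by
  induction u generalizing v φ with
  | nil => rw [List.nil_append, shG_back_left]; simp [shG]
  | cons x u ihu =>
    induction v generalizing φ with
    | nil => rw [List.nil_append, shG_back_right]; simp [shG_nil_right]
    | cons y v ihv =>
      have h1 := ihu (y :: v) (fun w => φ (x :: w))
      have h2 := ihv (fun w => φ (y :: w))
      simp only [List.cons_append] at h1 h2 ⊢
      simp only [shG, List.cons_append]
      rw [h1, h2]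
      ring

theorem shufW_pair {d : ℕ} (n : ℕ) (u v : List (Fin d)) (hn : u.length + v.length = n)
    (φ : List (Fin d) → ℝ) :
    (shufW u v).sum (fun w c => c * φ w) = shG φ u v := by
  induction n using Nat.strong_induction_on generalizing u v φ with
  | _ n ih =>
    rcases List.eq_nil_or_concat u with rfl | ⟨u, a, rfl⟩
    · rw [shufW.eq_def]; simp [shG]
    rcases List.eq_nil_or_concat v with rfl | ⟨v, b, rfl⟩
    · rw [shufW.eq_def]
      dsimp only
      split
      · simp_all
      · simp [shG_nil_right]
      · simp_all
    rw [shufW.eq_def]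
    dsimp only
    split
    · simp_all
    · simp_all
    · rename_i a' u' b' v' hu hv
      simp only [List.concat_eq_append, List.reverse_append, List.reverse_cons, List.reverse_nil,
        List.nil_append, List.cons_append, List.cons.injEq] at hu hv
      obtain ⟨rfl, rfl⟩ := hu
      obtain ⟨rfl, rfl⟩ := hv
      simp only [List.reverse_reverse, List.concat_eq_append]
      simp only [List.concat_eq_append, List.length_append, List.length_singleton] at hn
      rw [shG_back, Finsupp.sum_add_index' (by simp) (by intros; ring),
        Finsupp.sum_mapDomain_index (by simp) (by intros; ring),
        Finsupp.sum_mapDomain_index (by simp) (by intros; ring)]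
      rw [ih _ (by subst hn; simp only [List.length_append, List.length_singleton]; omega) u (v ++ [b]) rfl (fun w => φ (w ++ [a])),
        ih _ (by subst hn; simp only [List.length_append, List.length_singleton]; omega) (u ++ [a]) v rfl (fun w => φ (w ++ [b]))]

theorem shG_continuous {d : ℕ} (u v : List (Fin d)) (φ : ℝ → List (Fin d) → ℝ)
    (hφ : ∀ w, Continuous fun t => φ t w) : Continuous fun t => shG (φ t) u v := by
  induction u generalizing v φ with
  | nil => simpa [shG] using hφ v
  | cons x u ihu =>
    induction v generalizing φ with
    | nil => simpa [shG] using hφ (x :: u)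
    | cons y v ihv =>
      simp only [shG]
      exact (ihu (y :: v) (fun t w => φ t (x :: w)) (fun w => hφ _)).add
        (ihv (fun t w => φ t (y :: w)) (fun w => hφ _))

theorem shG_integral {d : ℕ} (f : ℝ → ℝ) (hf : Continuous f) (s e : ℝ) (u v : List (Fin d))
    (φ : ℝ → List (Fin d) → ℝ) (hφ : ∀ w, Continuous fun t => φ t w) :
    shG (fun w => ∫ t in s..e, f t * φ t w) u v = ∫ t in s..e, f t * shG (φ t) u v := by
  induction u generalizing v φ with
  | nil => simp [shG]
  | cons x u ihu =>
    induction v generalizing φ with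
    | nil => simp [shG]
    | cons y v ihv =>
      simp only [shG]
      rw [ihu (y :: v) (fun t w => φ t (x :: w)) (fun w => hφ _),
        ihv (fun t w => φ t (y :: w)) (fun w => hφ _), ← intervalIntegral.integral_add]
      · simp only [mul_add]
      · exact (hf.mul (shG_continuous u (y :: v) (fun t w => φ t (x :: w))
          (fun w => hφ _))).intervalIntegrable _ _
      · exact (hf.mul (shG_continuous (x :: u) v (fun t w => φ t (y :: w))
          (fun w => hφ _))).intervalIntegrable _ _

theorem sig_hasDerivAt {d : ℕ} (X : ℝ → Fin d → ℝ) (hX : ∀ i, Continuous (deriv fun t => X t i))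
    (e : ℝ) (i : Fin d) (w : List (Fin d)) (hw : Continuous fun t => sig X t e w) (s : ℝ) :
    HasDerivAt (fun s => sig X s e (i :: w))
      (-(deriv (fun t => X t i) s * sig X s e w)) s := by
  have hc : Continuous fun t => deriv (fun t => X t i) t * sig X t e w := (hX i).mul hw
  simp only [sig]
  exact intervalIntegral.integral_hasDerivAt_left (hc.intervalIntegrable _ _)
    hc.stronglyMeasurable.stronglyMeasurableAtFilter hc.continuousAt

theorem sig_continuous {d : ℕ} (X : ℝ → Fin d → ℝ) (hX : ∀ i, Continuous (deriv fun t => X t i))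
    (e : ℝ) (w : List (Fin d)) : Continuous fun t => sig X t e w := by
  induction w with
  | nil => simpa [sig] using continuous_const
  | cons i w ih =>
    exact continuous_iff_continuousAt.2 fun s => (sig_hasDerivAt X hX e i w ih s).continuousAt

theorem shG_sig {d : ℕ} (X : ℝ → Fin d → ℝ) (hX : ∀ i, Continuous (deriv fun t => X t i))
    (e : ℝ) (u v : List (Fin d)) (s : ℝ) :
    shG (sig X s e) u v = sig X s e u * sig X s e v := by
  induction u generalizing v s with
  | nil => simp [shG, sig]
  | cons x u ihu =>
    induction v generalizing s with
    | nil => simp [shG, sig]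
    | cons y v ihv =>
      have hc := sig_continuous X hX e
      rw [shG]
      have hx : (fun w => sig X s e (x :: w))
          = fun w => ∫ t in s..e, deriv (fun r => X r x) t * sig X t e w := by
        funext w; rw [sig]
      have hy : (fun w => sig X s e (y :: w))
          = fun w => ∫ t in s..e, deriv (fun r => X r y) t * sig X t e w := by
        funext w; rw [sig]
      rw [hx, hy, shG_integral _ (hX x) _ _ _ _ (fun t => sig X t e) hc,
        shG_integral _ (hX y) _ _ _ _ (fun t => sig X t e) hc]
      simp only [ihu, ihv]
      have i1 : IntervalIntegrable (fun t => deriv (fun r => X r x) t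
          * (sig X t e u * sig X t e (y :: v))) MeasureTheory.volume s e :=
        ((hX x).mul ((hc u).mul (hc (y :: v)))).intervalIntegrable s e
      have i2 : IntervalIntegrable (fun t => deriv (fun r => X r y) t
          * (sig X t e (x :: u) * sig X t e v)) MeasureTheory.volume s e :=
        ((hX y).mul ((hc (x :: u)).mul (hc v))).intervalIntegrable s e
      rw [← intervalIntegral.integral_add i1 i2]
      have hd : ∀ t ∈ Set.uIcc s e,
          HasDerivAt (fun t => -(sig X t e (x :: u) * sig X t e (y :: v)))
            (deriv (fun r => X r x) t * (sig X t e u * sig X t e (y :: v))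
              + deriv (fun r => X r y) t * (sig X t e (x :: u) * sig X t e v)) t := by
        intro t _
        refine ((sig_hasDerivAt X hX e x u (hc u) t).mul
          (sig_hasDerivAt X hX e y v (hc v) t)).neg.congr_deriv ?_
        ring
      rw [intervalIntegral.integral_eq_sub_of_hasDerivAt hd (i1.add i2)]
      have h0 : sig X e e (x :: u) = 0 := by rw [sig]; simp
      rw [h0]; ring

/-- **Ree's shuffle identity.**  For a path `X : [0,1] → ℝ^d` with continuously
differentiable coordinates, the linear extension of the signature is an algebra homomorphism
from the shuffle algebra to `ℝ`: for all words `u, v`, `σ(X)(u ⧢ v) = σ(X)_u * σ(X)_v`. -/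
theorem ree_shuffle_identity (d : ℕ) (hd : 1 ≤ d) (X : ℝ → Fin d → ℝ)
    (hX : ∀ i, ContDiff ℝ 1 fun t => X t i) (u v : List (Fin d)) :
    sigL X (shufW u v) = sig X 0 1 u * sig X 0 1 v := by
  have hX' : ∀ i, Continuous (deriv fun t => X t i) := fun i =>
    (hX i).continuous_deriv le_rfl
  rw [sigL, shufW_pair _ u v rfl, shG_sig X hX']
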